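/- arXiv:1907.00726 — 4 statements merged into one kernel-verified Lean document; each statement's English description precedes it below -/
import Mathlib

section
/- Let V be a real vector space and let p, q be real numbers with p² < 6q. If J_M is a linear endomorphism of V satisfying J_M ∘ J_M - p • J_M + (3q/2) • id = 0, then the endomorphism J := (1/Real.sqrt (6q - p²)) • (2 • J_M - p • id) satisfies J ∘ J = - id, and likewise -J satisfies (-J) ∘ (-J) = - id; i.e., both are complex structures on V. -/
/-- If `J_M` is an almost complex metallic structure on a real vector
space `V` (with `p² < 6q`), then `J := (1/√(6q - p²)) • (2 J_M - p id)` and `-J` are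
both almost complex structures on `V`. -/
theorem metallic_gives_complex_structures {V : Type*} [AddCommGroup V] [Module ℝ V]
    (p q : ℝ) (hpq : p ^ 2 < 6 * q) (JM : V →ₗ[ℝ] V)
    (h : JM ∘ₗ JM - p • JM + (3 * q / 2) • (LinearMap.id : V →ₗ[ℝ] V) = 0) :
    (((1 / Real.sqrt (6 * q - p ^ 2)) • ((2 : ℝ) • JM - p • (LinearMap.id : V →ₗ[ℝ] V))) ∘ₗ
      ((1 / Real.sqrt (6 * q - p ^ 2)) • ((2 : ℝ) • JM - p • (LinearMap.id : V →ₗ[ℝ] V))) =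
        -(LinearMap.id : V →ₗ[ℝ] V)) ∧
    ((-((1 / Real.sqrt (6 * q - p ^ 2)) • ((2 : ℝ) • JM - p • (LinearMap.id : V →ₗ[ℝ] V)))) ∘ₗ
      (-((1 / Real.sqrt (6 * q - p ^ 2)) • ((2 : ℝ) • JM - p • (LinearMap.id : V →ₗ[ℝ] V)))) =
        -(LinearMap.id : V →ₗ[ℝ] V)) := by
  have hpos : 0 < 6 * q - p ^ 2 := by linarith
  have hs : (1 / Real.sqrt (6 * q - p ^ 2)) * (1 / Real.sqrt (6 * q - p ^ 2)) *
      (6 * q - p ^ 2) = 1 := by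
    have h1 := Real.mul_self_sqrt hpos.le
    have h2 := (Real.sqrt_pos.mpr hpos).ne'
    rw [div_mul_div_comm, h1]
    field_simp
  generalize 1 / Real.sqrt (6 * q - p ^ 2) = c at hs ⊢
  have key : (c • ((2 : ℝ) • JM - p • (LinearMap.id : V →ₗ[ℝ] V))) ∘ₗ
      (c • ((2 : ℝ) • JM - p • (LinearMap.id : V →ₗ[ℝ] V))) = -(LinearMap.id : V →ₗ[ℝ] V) := by
    ext x
    have hx : JM (JM x) = p • JM x - (3 * q / 2) • x := by
      have := LinearMap.congr_fun h x
      simp only [LinearMap.add_apply, LinearMap.sub_apply, LinearMap.comp_apply,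
        LinearMap.smul_apply, LinearMap.id_apply, LinearMap.zero_apply] at this
      rw [← sub_eq_zero, ← this]
      abel
    simp only [LinearMap.sub_apply, LinearMap.comp_apply, LinearMap.neg_apply,
      LinearMap.smul_apply, LinearMap.id_apply, map_smul, map_sub, hx]
    have : -x = -((c * c * (6 * q - p ^ 2)) • x) := by rw [hs, one_smul]
    rw [this]
    module
  refine ⟨key, ?_⟩
  rw [LinearMap.neg_comp, LinearMap.comp_neg, neg_neg]
  exact key
end

section
/- Let V be a real vector space and let p, q be real numbers with p² < 6q. If J is a linear endomorphism of V satisfying J ∘ J = - id, then both endomorphisms J_M^± := (p/2) • id ± (Real.sqrt (6q - p²)/2) • J satisfy J_M^± ∘ J_M^± - p • J_M^± + (3q/2) • id = 0; i.e., each is an almost complex metallic structure on V. -/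
/-- If `J` is an almost complex structure on a real vector space `V`
(with `p² < 6q`), then `J_M^± := (p/2) • id ± (√(6q - p²)/2) • J` are both almost
complex metallic structures on `V`. -/
theorem complex_gives_metallic_structures {V : Type*} [AddCommGroup V] [Module ℝ V]
    (p q : ℝ) (hpq : p ^ 2 < 6 * q) (J : V →ₗ[ℝ] V)
    (h : J ∘ₗ J = -(LinearMap.id : V →ₗ[ℝ] V)) :
    (((p / 2) • (LinearMap.id : V →ₗ[ℝ] V) + (Real.sqrt (6 * q - p ^ 2) / 2) • J) ∘ₗ
        ((p / 2) • (LinearMap.id : V →ₗ[ℝ] V) + (Real.sqrt (6 * q - p ^ 2) / 2) • J)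
      - p • ((p / 2) • (LinearMap.id : V →ₗ[ℝ] V) + (Real.sqrt (6 * q - p ^ 2) / 2) • J)
      + (3 * q / 2) • (LinearMap.id : V →ₗ[ℝ] V) = 0) ∧
    (((p / 2) • (LinearMap.id : V →ₗ[ℝ] V) - (Real.sqrt (6 * q - p ^ 2) / 2) • J) ∘ₗ
        ((p / 2) • (LinearMap.id : V →ₗ[ℝ] V) - (Real.sqrt (6 * q - p ^ 2) / 2) • J)
      - p • ((p / 2) • (LinearMap.id : V →ₗ[ℝ] V) - (Real.sqrt (6 * q - p ^ 2) / 2) • J)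
      + (3 * q / 2) • (LinearMap.id : V →ₗ[ℝ] V) = 0) := by
  have hs : Real.sqrt (6 * q - p ^ 2) ^ 2 = 6 * q - p ^ 2 := Real.sq_sqrt (by linarith)
  have hJ : ∀ x, J (J x) = -x := fun x => by
    have := LinearMap.congr_fun h x
    simpa using this
  generalize Real.sqrt (6 * q - p ^ 2) = s at hs
  constructor
  · ext x
    simp only [LinearMap.add_apply, LinearMap.sub_apply, LinearMap.comp_apply,
      LinearMap.smul_apply, LinearMap.id_apply, LinearMap.zero_apply, map_add, map_smul, hJ]
    match_scalars
    · linear_combination (-1 / 4) * hs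
    · ring
  · ext x
    simp only [LinearMap.add_apply, LinearMap.sub_apply, LinearMap.comp_apply,
      LinearMap.smul_apply, LinearMap.id_apply, LinearMap.zero_apply, map_sub, map_smul, hJ]
    match_scalars
    · linear_combination (-1 / 4) * hs
    · ring
end

section
/- Let V be a real vector space, p, q real numbers, J_M a linear endomorphism of V with J_M ∘ J_M = p • J_M - (3q/2) • id, and g : V →ₗ V →ₗ ℝ a bilinear form which is hyperbolic with respect to J_M (g(J_M x, y) = - g(x, J_M y) for all x, y). Let A : V →ₗ V →ₗ V be a bilinear map such that A(x, y) = - A(y, x) for all x, y, and A(x, J_M y) + J_M (A(x, y)) = p • A(x, y) for all x, y. Then for all x, y, z ∈ V, g(A(J_M x, y), J_M z) = (3q/2) · g(A(y, x), z). -/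
/-- Pointwise form of `F(J_M X, Y, J_M Z) = (3q/2) F(Y, X, Z)` on a
nearly metallic Kähler manifold, with `A x y` in the role of `(∇_X J_M)Y`. -/
theorem nearly_F_identity {V : Type*} [AddCommGroup V] [Module ℝ V]
    (p q : ℝ) (JM : V →ₗ[ℝ] V)
    (h : JM ∘ₗ JM = p • JM - (3 * q / 2) • (LinearMap.id : V →ₗ[ℝ] V))
    (g : V →ₗ[ℝ] V →ₗ[ℝ] ℝ)
    (hg : ∀ x y : V, g (JM x) y = - g x (JM y))
    (A : V →ₗ[ℝ] V →ₗ[ℝ] V)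
    (hanti : ∀ x y : V, A x y = - A y x)
    (hLeib : ∀ x y : V, A x (JM y) + JM (A x y) = p • A x y) :
    ∀ x y z : V, g (A (JM x) y) (JM z) = (3 * q / 2) * g (A y x) z := by
  intro x y z
  have e : JM (A (JM x) y) = -((3 * q / 2) • A y x) := by
    have h1 : A (JM x) y = JM (A y x) - p • A y x := by
      rw [hanti, ← hLeib y x]; abel
    have h2 : JM (JM (A y x)) = p • JM (A y x) - (3 * q / 2) • A y x := by
      have := LinearMap.congr_fun h (A y x)
      simpa using this
    rw [h1, map_sub, map_smul, h2]; abel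
  have h3 := hg (A (JM x) y) z
  rw [e] at h3
  simp only [map_neg, map_smul, LinearMap.neg_apply, LinearMap.smul_apply, smul_eq_mul] at h3
  linarith
end

section
/- Let V be a real vector space, p, q real numbers with q > 0, J_M a linear endomorphism of V with J_M ∘ J_M = p • J_M - (3q/2) • id, and g : V →ₗ V →ₗ ℝ a bilinear form which is nondegenerate (g(v, w) = 0 for all w implies v = 0). If A and s are linear endomorphisms of V such that g(J_M (s y), z) = -(3/2) · g(A y, z) for all y, z ∈ V, then s = -(1/q) • ((p • id - J_M) ∘ A). -/
/-- The linear connection of the second type on a nearly metallic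
Kähler manifold: if `g(J_M (s y), z) = -(3/2) g(A y, z)` for all `y, z`, with `g`
nondegenerate and `q > 0`, then `s = -(1/q) • (Ĵ_M ∘ A)` with `Ĵ_M = p • id - J_M`. -/
theorem second_type_connection {V : Type*} [AddCommGroup V] [Module ℝ V]
    (p q : ℝ) (hq : q > 0) (JM : V →ₗ[ℝ] V)
    (h : JM ∘ₗ JM = p • JM - (3 * q / 2) • (LinearMap.id : V →ₗ[ℝ] V))
    (g : V →ₗ[ℝ] V →ₗ[ℝ] ℝ)
    (hnd : ∀ v : V, (∀ w : V, g v w = 0) → v = 0)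
    (A s : V →ₗ[ℝ] V)
    (hs : ∀ y z : V, g (JM (s y)) z = -(3 / 2) * g (A y) z) :
    s = -(1 / q) • ((p • (LinearMap.id : V →ₗ[ℝ] V) - JM) ∘ₗ A) := by
  ext y
  have h1 : JM (s y) + (3 / 2 : ℝ) • A y = 0 := by
    apply hnd
    intro w
    simp only [map_add, map_smul, LinearMap.add_apply, LinearMap.smul_apply, smul_eq_mul, hs]
    ring
  have h2 : A y = (-(2 / 3) : ℝ) • JM (s y) := by
    rw [eq_neg_of_add_eq_zero_left h1]
    module
  have h3 : JM (JM (s y)) = p • JM (s y) - (3 * q / 2) • s y := by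
    simpa using LinearMap.congr_fun h (s y)
  have hq0 : q ≠ 0 := hq.ne'
  simp only [LinearMap.smul_apply, LinearMap.comp_apply, LinearMap.sub_apply,
    LinearMap.id_apply, h2, map_smul, h3]
  match_scalars <;> field_simp <;> ring
end
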